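/- arXiv:1102.5185 — 2 statements merged into one kernel-verified Lean document; each statement's English description precedes it below -/
import Mathlib

section
/- Let M be a monoid, let N ≥ 2, and let c : Fin N → M be a family of elements such that for all indices i ≠ j and all x, y, z ∈ M one has x * (c i) * y ≠ x * (c j) * z. Then the monoid homomorphism from the free monoid on Fin N to M that sends the i-th generator to c i is injective. Consequently, its range is a submonoid of M isomorphic, as a monoid, to the free monoid on N generators, and this submonoid contains the image of every word over the N-letter alphabet. -/
/-!
`M` need not be left cancellative, so a common first letter of two words cannot be cancelled.
Instead, injectivity is proved for `w ↦ p * FreeMonoid.lift c w` with an arbitrary left factor `p`: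
in the induction on words, a common first letter is absorbed into `p`. If one word runs out first,
then `p = p * c j * m` for some letter `j`; multiplying on the right by another letter `c i` gives
`p * c i = p * c j * (m * c i)`, which the hypothesis forbids.
-/

theorem mrangeRestrict_bijective_of_injective {A B : Type*} [MulOneClass A] [MulOneClass B]
    {f : A →* B} (hf : Function.Injective f) : Function.Bijective f.mrangeRestrict :=
  ⟨fun _ _ h ↦ hf (congrArg Subtype.val h), f.mrangeRestrict_surjective⟩

section Words

variable {α M : Type*} {c : α → M}

theorem mul_lift_of_mul [Monoid M] (p : M) (i : α) (w : FreeMonoid α) :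
    p * FreeMonoid.lift c (FreeMonoid.of i * w) = p * c i * FreeMonoid.lift c w := by
  rw [map_mul, FreeMonoid.lift_eval_of, mul_assoc]

variable [Nontrivial α]

theorem mul_letter_mul_ne_self [Semigroup M]
    (hc : Pairwise fun i j ↦ ∀ x y z : M, x * c i * y ≠ x * c j * z) (p : M) (j : α) (m : M) :
    p * c j * m ≠ p := by
  intro h
  obtain ⟨i, hij⟩ := exists_ne j
  -- A semigroup has no `1` to put after `c i`, but any element will do there, for instance `p`.
  apply hc hij p p (m * c i * p)
  calc p * c i * p = p * c j * m * c i * p := by rw [h]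
    _ = p * c j * (m * c i * p) := by simp only [mul_assoc]

theorem mul_lift_injective [Monoid M]
    (hc : Pairwise fun i j ↦ ∀ x y z : M, x * c i * y ≠ x * c j * z) (p : M) :
    Function.Injective fun w : FreeMonoid α ↦ p * FreeMonoid.lift c w := by
  intro u v h
  beta_reduce at h
  induction u using FreeMonoid.inductionOn' generalizing p v with
  | one =>
    cases v using FreeMonoid.casesOn with
    | one => rfl
    | of_mul j v =>
      rw [map_one, mul_one, mul_lift_of_mul] at h
      exact absurd h.symm (mul_letter_mul_ne_self hc p j _)
  | of_mul i u ih =>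
    cases v using FreeMonoid.casesOn with
    | one =>
      rw [map_one, mul_one, mul_lift_of_mul] at h
      exact absurd h (mul_letter_mul_ne_self hc p i _)
    | of_mul j v =>
      rw [mul_lift_of_mul, mul_lift_of_mul] at h
      obtain rfl : i = j := by
        by_contra hij
        exact hc hij p _ _ h
      rw [ih (p * c i) h]

theorem lift_injective_of_distinctness_general [Monoid M]
    (hc : Pairwise fun i j ↦ ∀ x y z : M, x * c i * y ≠ x * c j * z) :
    Function.Injective (FreeMonoid.lift c) ∧
    Nonempty (FreeMonoid α ≃* MonoidHom.mrange (FreeMonoid.lift c)) ∧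
    ∀ w : FreeMonoid α, FreeMonoid.lift c w ∈ MonoidHom.mrange (FreeMonoid.lift c) := by
  have hinj : Function.Injective (FreeMonoid.lift c) := by
    simpa only [one_mul] using mul_lift_injective hc 1
  exact ⟨hinj, ⟨MulEquiv.ofBijective _ (mrangeRestrict_bijective_of_injective hinj)⟩,
    fun w ↦ ⟨w, rfl⟩⟩

end Words

/-- Lemma 5.2: if `M` is a monoid, `N ≥ 2`, and `c : Fin N → M`
satisfies `x * c i * y ≠ x * c j * z` for all `i ≠ j` and all `x y z`, then the
monoid homomorphism `FreeMonoid.lift c` (sending the `i`-th generator to `c i`)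
is injective; consequently its range is a submonoid of `M` isomorphic to the
free monoid on `N` generators, containing the image of every word. -/
theorem lift_injective_of_distinctness {M : Type*} [Monoid M] (N : ℕ) (hN : 2 ≤ N)
    (c : Fin N → M)
    (hc : ∀ i j : Fin N, i ≠ j → ∀ x y z : M, x * c i * y ≠ x * c j * z) :
    Function.Injective (FreeMonoid.lift c) ∧
    Nonempty (FreeMonoid (Fin N) ≃* MonoidHom.mrange (FreeMonoid.lift c)) ∧
    ∀ w : FreeMonoid (Fin N), FreeMonoid.lift c w ∈ MonoidHom.mrange (FreeMonoid.lift c) := by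
  have : Nontrivial (Fin N) := Fin.nontrivial_iff_two_le.mpr hN
  exact lift_injective_of_distinctness_general hc
end

section
/- Let 𝒜 be a type and W = 𝒜* the free monoid of words over 𝒜. Let T_α, T_β be sets with ternary relations E_α, E_β, and let E be a ternary relation on T_α × T_β satisfying the compatibility law: E_α A B C implies E (A,D) (B,D) (C,D) for every D ∈ T_β. Then for all languages 𝓚, 𝓛 ⊆ W × T_α and 𝓜 ⊆ W × T_β: (𝓚 ⊔ 𝓛) ⊙ 𝓜 = (𝓚 ⊙ 𝓜) ⊔ (𝓛 ⊙ 𝓜), where ⊔ is the logical join (logical closure of the union, with respect to the appropriate relation) and ⊙ is the logical concatenation (logical closure, with respect to E, of the concatenation language). -/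
/-!
Right translation `(u, A) ↦ (uv, (A, D))` by a fixed `(v, D) ∈ 𝓜` carries `Eα` into `E`, so it pulls
`E`-closed languages back to `Eα`-closed ones. Hence closing the left factor of a concatenation does
not change the logical closure of the concatenation, and the identity reduces to distributivity of
concatenation over unions.
-/

/-- A language `𝓛 ⊆ W × T` is logically closed w.r.t. `E` (Definition 3.4). -/
def LClosedLang {W T : Type*} (E : T → T → T → Prop) (L : Set (W × T)) : Prop :=
  ∀ (w : W) (A B C : T), (w, B) ∈ L → (w, C) ∈ L → E A B C → (w, A) ∈ L

/-- Logical closure of a language. -/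
def lclosureLang {W T : Type*} (E : T → T → T → Prop) (L : Set (W × T)) :
    Set (W × T) :=
  ⋂₀ {S : Set (W × T) | L ⊆ S ∧ LClosedLang E S}

/-- Language concatenation over the free monoid of words (Definition 3.2):
`𝓛·𝓚 = {(uv, (A, B)) : (u, A) ∈ 𝓛, (v, B) ∈ 𝓚}`. -/
def catLang {𝒜 Tα Tβ : Type*} (L : Set (FreeMonoid 𝒜 × Tα))
    (K : Set (FreeMonoid 𝒜 × Tβ)) : Set (FreeMonoid 𝒜 × (Tα × Tβ)) :=
  {p | ∃ u v A B, (u, A) ∈ L ∧ (v, B) ∈ K ∧ p = (u * v, (A, B))}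

section Closure

variable {W V T T' : Type*} {E : T → T → T → Prop} {E' : T' → T' → T' → Prop}

theorem lClosedLang_lclosureLang (E : T → T → T → Prop) (L : Set (W × T)) :
    LClosedLang E (lclosureLang E L) :=
  fun w A B C hB hC h S hS => hS.2 w A B C (hB S hS) (hC S hS) h

/-- Logical closure as a closure operator on languages, with the logically closed languages as its
closed elements; this makes Mathlib's order-theoretic closure lemmas available for it. -/
def lclosureOperator (W : Type*) (E : T → T → T → Prop) : ClosureOperator (Set (W × T)) :=
  .ofPred (lclosureLang E) (LClosedLang E) (fun _ => Set.subset_sInter fun _ hS => hS.1)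
    (lClosedLang_lclosureLang E) fun _ _ hLS hS => Set.sInter_subset_of_mem ⟨hLS, hS⟩

theorem subset_lclosureLang (E : T → T → T → Prop) (L : Set (W × T)) : L ⊆ lclosureLang E L :=
  (lclosureOperator W E).le_closure L

theorem lclosureLang_subset_iff {L S : Set (W × T)} (hS : LClosedLang E S) :
    lclosureLang E L ⊆ S ↔ L ⊆ S :=
  ClosureOperator.IsClosed.closure_le_iff (c := lclosureOperator W E) hS

theorem lclosureLang_mono {K L : Set (W × T)} (h : K ⊆ L) :
    lclosureLang E K ⊆ lclosureLang E L :=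
  (lclosureOperator W E).monotone h

theorem lclosureLang_union_lclosureLang (E : T → T → T → Prop) (K L : Set (W × T)) :
    lclosureLang E (lclosureLang E K ∪ lclosureLang E L) = lclosureLang E (K ∪ L) :=
  (lclosureOperator W E).closure_sup_closure K L

theorem LClosedLang.preimage_prodMap {S : Set (V × T')} (hS : LClosedLang E' S) (g : W → V)
    {φ : T → T'} (hφ : ∀ A B C, E A B C → E' (φ A) (φ B) (φ C)) :
    LClosedLang E (Prod.map g φ ⁻¹' S) :=
  fun w A B C hB hC h => hS (g w) (φ A) (φ B) (φ C) hB hC (hφ A B C h)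

theorem image_prodMap_lclosureLang_subset (g : W → V) {φ : T → T'}
    (hφ : ∀ A B C, E A B C → E' (φ A) (φ B) (φ C)) (L : Set (W × T)) :
    Prod.map g φ '' lclosureLang E L ⊆ lclosureLang E' (Prod.map g φ '' L) := by
  have hclosed : LClosedLang E (Prod.map g φ ⁻¹' lclosureLang E' (Prod.map g φ '' L)) :=
    (lClosedLang_lclosureLang E' _).preimage_prodMap g hφ
  rw [Set.image_subset_iff, lclosureLang_subset_iff hclosed, ← Set.image_subset_iff]
  exact subset_lclosureLang E' _

end Closure

section Concatenation

variable {W Tα Tβ : Type*} [Mul W]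

/-- Concatenation of languages whose words are multiplied in an arbitrary `W`; `catLang` is the case
where `W` is a free monoid. -/
def concatLang (L : Set (W × Tα)) (K : Set (W × Tβ)) : Set (W × (Tα × Tβ)) :=
  Set.image2 (fun p q => (p.1 * q.1, (p.2, q.2))) L K

theorem catLang_eq_concatLang {𝒜 : Type*} (L : Set (FreeMonoid 𝒜 × Tα))
    (K : Set (FreeMonoid 𝒜 × Tβ)) : catLang L K = concatLang L K := by
  ext p
  constructor
  · rintro ⟨u, v, A, B, hA, hB, rfl⟩
    exact Set.mem_image2_of_mem hA hB
  · rintro ⟨⟨u, A⟩, hA, ⟨v, B⟩, hB, rfl⟩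
    exact ⟨u, v, A, B, hA, hB, rfl⟩

theorem concatLang_mono_left {K L : Set (W × Tα)} (h : K ⊆ L) (M : Set (W × Tβ)) :
    concatLang K M ⊆ concatLang L M :=
  Set.image2_subset_right h

theorem concatLang_union_left (K L : Set (W × Tα)) (M : Set (W × Tβ)) :
    concatLang (K ∪ L) M = concatLang K M ∪ concatLang L M :=
  Set.image2_union_left

variable {Eα : Tα → Tα → Tα → Prop} {E : Tα × Tβ → Tα × Tβ → Tα × Tβ → Prop}

theorem concatLang_lclosureLang_left_subset
    (hE : ∀ (A B C : Tα) (D : Tβ), Eα A B C → E (A, D) (B, D) (C, D))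
    (L : Set (W × Tα)) (M : Set (W × Tβ)) :
    concatLang (lclosureLang Eα L) M ⊆ lclosureLang E (concatLang L M) := by
  rintro _ ⟨p, hp, ⟨v, D⟩, hD, rfl⟩
  have translate_subset : Prod.map (· * v) (·, D) '' L ⊆ concatLang L M :=
    Set.image_subset_iff.2 fun q hq => ⟨q, hq, (v, D), hD, rfl⟩
  exact lclosureLang_mono translate_subset <|
    image_prodMap_lclosureLang_subset (· * v) (fun A B C => hE A B C D) L
      (Set.mem_image_of_mem _ hp)

theorem lclosureLang_concatLang_lclosureLang_left
    (hE : ∀ (A B C : Tα) (D : Tβ), Eα A B C → E (A, D) (B, D) (C, D))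
    (L : Set (W × Tα)) (M : Set (W × Tβ)) :
    lclosureLang E (concatLang (lclosureLang Eα L) M) = lclosureLang E (concatLang L M) :=
  Set.Subset.antisymm
    ((lclosureLang_subset_iff (lClosedLang_lclosureLang E _)).2
      (concatLang_lclosureLang_left_subset hE L M))
    (lclosureLang_mono (concatLang_mono_left (subset_lclosureLang Eα L) M))

theorem join_ocat_distrib_general
    (hE : ∀ (A B C : Tα) (D : Tβ), Eα A B C → E (A, D) (B, D) (C, D))
    (K L : Set (W × Tα)) (M : Set (W × Tβ)) :
    lclosureLang E (concatLang (lclosureLang Eα (K ∪ L)) M) =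
      lclosureLang E (lclosureLang E (concatLang K M) ∪ lclosureLang E (concatLang L M)) :=
  calc
    lclosureLang E (concatLang (lclosureLang Eα (K ∪ L)) M)
    _ = lclosureLang E (concatLang (K ∪ L) M) := lclosureLang_concatLang_lclosureLang_left hE _ M
    _ = lclosureLang E (concatLang K M ∪ concatLang L M) := by rw [concatLang_union_left]
    _ = lclosureLang E (lclosureLang E (concatLang K M) ∪ lclosureLang E (concatLang L M)) :=
      (lclosureLang_union_lclosureLang E _ _).symm

end Concatenation

/-- first identity of Lemma 3.1: if `E` is compatible with `E_α`
in the first coordinate, then `(𝓚 ⊔ 𝓛) ⊙ 𝓜 = (𝓚 ⊙ 𝓜) ⊔ (𝓛 ⊙ 𝓜)`, where `⊔`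
is the logical join and `⊙` the logical concatenation. -/
theorem join_ocat_distrib {𝒜 Tα Tβ : Type*}
    (Eα : Tα → Tα → Tα → Prop) (Eβ : Tβ → Tβ → Tβ → Prop)
    (E : Tα × Tβ → Tα × Tβ → Tα × Tβ → Prop)
    (hE : ∀ (A B C : Tα) (D : Tβ), Eα A B C → E (A, D) (B, D) (C, D))
    (K L : Set (FreeMonoid 𝒜 × Tα)) (M : Set (FreeMonoid 𝒜 × Tβ)) :
    lclosureLang E (catLang (lclosureLang Eα (K ∪ L)) M) =
      lclosureLang E (lclosureLang E (catLang K M) ∪ lclosureLang E (catLang L M)) := by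
  simp only [catLang_eq_concatLang]
  exact join_ocat_distrib_general hE K L M
end
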